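/- Let L and K be integers with 1 ≤ K ≤ L < 2K, let δ > 0 be a real number, and let x_1, …, x_L be real numbers. Define ℋ := {l ∈ {1,…,L} : there exists y ∈ ℝ with y ≤ x_l ≤ y + 2δ such that |{l' ∈ {1,…,L} : y ≤ x_{l'} ≤ y + 2δ}| ≥ K}. Suppose there exist a set 𝒢 ⊆ {1,…,L} with |𝒢| ≥ K and a real number a such that |x_l − a| < δ for all l ∈ 𝒢. Then 𝒢 ⊆ ℋ, and |x_l − a| < 3δ for every l ∈ ℋ. -/

import Mathlib

open Classical in
/-- The label `l` is retained if `x l` lies in some interval of length `2δ`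
containing at least `K` of the `L` values. -/
def retained (L K : ℕ) (δ : ℝ) (x : Fin L → ℝ) (l : Fin L) : Prop :=
  ∃ y : ℝ, y ≤ x l ∧ x l ≤ y + 2 * δ ∧
    K ≤ (Finset.univ.filter (fun l' => y ≤ x l' ∧ x l' ≤ y + 2 * δ)).card

section Cluster

variable {ι α : Type*} [PseudoMetricSpace α]
  {K : ℕ} {d δ : ℝ} {x : ι → α} {l : ι} {G : Finset ι} {a : α}

/-- The label `l` belongs to a cluster: a set of at least `K` labels whose values are pairwise
within distance `d`. This is the metric-space form of `retained`, in which a set of labels replaces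
the interval; labels rather than values are counted, so repeated values count with multiplicity. -/
def IsClustered (K : ℕ) (d : ℝ) (x : ι → α) (l : ι) : Prop :=
  ∃ S : Finset ι, l ∈ S ∧ K ≤ S.card ∧ ∀ i ∈ S, ∀ j ∈ S, dist (x i) (x j) ≤ d

theorem isClustered_of_forall_dist_le (hG : K ≤ G.card) (hgood : ∀ i ∈ G, dist (x i) a ≤ δ)
    (hl : l ∈ G) : IsClustered K (2 * δ) x l := by
  refine ⟨G, hl, hG, fun i hi j hj => ?_⟩
  calc
    dist (x i) (x j) ≤ dist (x i) a + dist (x j) a := dist_triangle_right _ _ _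
    _ ≤ δ + δ := add_le_add (hgood i hi) (hgood j hj)
    _ = 2 * δ := (two_mul δ).symm

theorem IsClustered.dist_lt_add [Fintype ι] (hl : IsClustered K d x l)
    (hcard : Fintype.card ι < K + G.card) (hgood : ∀ i ∈ G, dist (x i) a < δ) :
    dist (x l) a < d + δ := by
  classical
  obtain ⟨S, hlS, hKS, hS⟩ := hl
  obtain ⟨m, hm⟩ : (S ∩ G).Nonempty :=
    Finset.inter_nonempty_of_card_lt_card_add_card S.subset_univ G.subset_univ
      (hcard.trans_le (Nat.add_le_add_right hKS _))
  obtain ⟨hmS, hmG⟩ := Finset.mem_inter.mp hm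
  calc
    dist (x l) a ≤ dist (x l) (x m) + dist (x m) a := dist_triangle _ _ _
    _ < d + δ := add_lt_add_of_le_of_lt (hS l hlS m hmS) (hgood m hmG)

theorem retained_values_near_truth_general [Fintype ι] (hG : K ≤ G.card)
    (hcard : Fintype.card ι < K + G.card) (hgood : ∀ i ∈ G, dist (x i) a < δ) :
    (∀ l ∈ G, IsClustered K (2 * δ) x l) ∧
    (∀ l : ι, IsClustered K (2 * δ) x l → dist (x l) a < 3 * δ) := by
  refine ⟨fun l => isClustered_of_forall_dist_le hG fun i hi => (hgood i hi).le, fun l hl => ?_⟩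
  linarith [hl.dist_lt_add hcard hgood]

end Cluster

theorem retained_iff_isClustered {L K : ℕ} {δ : ℝ} {x : Fin L → ℝ} {l : Fin L} :
    retained L K δ x l ↔ IsClustered K (2 * δ) x l := by
  classical
  constructor
  · rintro ⟨y, hyl, hly, hcard⟩
    refine ⟨_, Finset.mem_filter.mpr ⟨Finset.mem_univ l, hyl, hly⟩, hcard, fun i hi j hj => ?_⟩
    calc
      dist (x i) (x j) ≤ y + 2 * δ - y :=
        Real.dist_le_of_mem_Icc (Finset.mem_filter.mp hi).2 (Finset.mem_filter.mp hj).2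
      _ = 2 * δ := add_sub_cancel_left y (2 * δ)
  · rintro ⟨S, hlS, hKS, hS⟩
    obtain ⟨m, hmS, hmin⟩ := S.exists_min_image x ⟨l, hlS⟩
    have hmax : ∀ i ∈ S, x i ≤ x m + 2 * δ := fun i hi =>
      sub_le_iff_le_add'.mp ((le_abs_self (x i - x m)).trans (hS i hi m hmS))
    refine ⟨x m, hmin l hlS, hmax l hlS, hKS.trans (Finset.card_le_card fun i hi => ?_)⟩
    exact Finset.mem_filter.mpr ⟨Finset.mem_univ i, hmin i hi, hmax i hi⟩

/-- If at least `K` of the values lie within distance `δ` of `a` (the good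
values, labels in `𝒢`), then every good label is retained and every retained
value is within `3δ` of `a`. -/
theorem retained_values_near_truth
    (L K : ℕ) (hK : 1 ≤ K) (hKL : K ≤ L) (hL2K : L < 2 * K)
    (δ : ℝ) (hδ : 0 < δ) (x : Fin L → ℝ)
    (G : Finset (Fin L)) (hG : K ≤ G.card)
    (a : ℝ) (hgood : ∀ l ∈ G, |x l - a| < δ) :
    (∀ l ∈ G, retained L K δ x l) ∧
    (∀ l : Fin L, retained L K δ x l → |x l - a| < 3 * δ) := by
  simp only [retained_iff_isClustered]
  exact retained_values_near_truth_general hG (by rw [Fintype.card_fin]; omega) hgood
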